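/- arXiv:2102.04041 — 2 statements merged into one kernel-verified Lean document; each statement's English description precedes it below -/
import Mathlib

section
/- Let n be an arbitrary positive integer and let G be a graph on n vertices with ρ(G) ≥ ρ(T_{n,2}) that is not isomorphic to T_{n,2}. Then the booksize of G is greater than n/6.5; that is, G contains the book B_r for some integer r > 2n/13. -/
open SimpleGraph Finset

attribute [local instance] Classical.propDecidable

/-- The spectral radius (largest adjacency eigenvalue) of a graph on `Fin n`. -/
noncomputable def adjSpectralRadius {n : ℕ} (G : SimpleGraph (Fin n)) : ℝ :=
  sSup (spectrum ℝ (G.adjMatrix ℝ))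

/-- `G` contains a copy of `H` (a subgraph isomorphic to `H`). -/
def Contains {α β : Type*} (G : SimpleGraph α) (H : SimpleGraph β) : Prop :=
  ∃ f : β ↪ α, ∀ a b, H.Adj a b → G.Adj (f a) (f b)

/-- The book `B_s`: `s` triangles sharing a common edge, i.e. `K_{2,s}` plus the
edge inside the part of size two. -/
def book (s : ℕ) : SimpleGraph (Fin 2 ⊕ Fin s) :=
  SimpleGraph.fromRel (fun x _ => x.isLeft = true)

/-- The theta graph `θ_{r+1} = θ(1,2,r+1)`: vertices `0,…,r+1` form a path of length
`r+1`, the edge `0 ~ (r+1)`, and vertex `r+2` is adjacent to `0` and `r+1`. -/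
def theta (r : ℕ) : SimpleGraph (Fin (r + 3)) :=
  SimpleGraph.fromRel (fun x y =>
    (x.val + 1 = y.val ∧ y.val ≤ r + 1) ∨
    (x.val = 0 ∧ y.val = r + 1) ∨
    (x.val = r + 2 ∧ (y.val = 0 ∨ y.val = r + 1)))

/-- The number of edges of a graph. -/
noncomputable def edgeCount {V : Type*} (G : SimpleGraph V) : ℕ := G.edgeSet.ncard

/-- The number of ordered pairs `(a,b) ∈ s × t` with `a ~ b`.  For disjoint `s` and `t`
this is the number `e(s,t)` of edges between `s` and `t`; for `s = t` it is `2·e(s)`. -/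
noncomputable def ordPairs {V : Type*} (G : SimpleGraph V) (s t : Finset V) : ℕ :=
  ((s ×ˢ t).filter fun p => G.Adj p.1 p.2).card

/-- The number of edges inside a vertex subset `s`. -/
noncomputable def edgesIn {V : Type*} (G : SimpleGraph V) (s : Finset V) : ℕ :=
  (G.induce (s : Set V)).edgeSet.ncard

/-!
Let `x ≥ 0` be a Perron vector of `G` with largest entry `x u = 1`, and let `ρ = ρ(G)`. Summing the
eigenvalue equations over `N(u)` gives
`ρ ^ 2 = |N(u)| * x(N(u)ᶜ) + (weight of edges inside N(u)) - (weight of non-edges leaving N(u))`.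
If the booksize is at most `r = 2n/13`, then the ends of an edge inside `N(u)` share few
neighbours outside `N(u)`, so every such edge forces a large weight of non-edges. For `n ≥ 7` the
loss exceeds the gain and contradicts `ρ ^ 2 ≥ ⌊n ^ 2 / 4⌋`, while for `n ≤ 6` the bound `r < 1`
means that there are no triangles at all. Hence `N(u)` is independent, and
`ρ ^ 2 ≤ ∑ v ∈ N(u), deg v ≤ |N(u)| * |N(u)ᶜ| ≤ ⌊n ^ 2 / 4⌋ ≤ ρ ^ 2` is a chain of equalities. So
every vertex of `N(u)` is joined to all of `N(u)ᶜ`; since `|N(u)| ≥ ρ > r`, an edge inside `N(u)ᶜ`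
would lie in too large a book. Thus `G` is bipartite with `⌊n ^ 2 / 4⌋` edges, i.e. `T_{n,2}`.
-/

section SpectrumOfSymmetricMatrix

open Matrix

variable {V : Type*} [Fintype V] {M : Matrix V V ℝ}

lemma dotProduct_mulVec_le_abs (hM : ∀ i j, 0 ≤ M i j) (y : V → ℝ) :
    y ⬝ᵥ M *ᵥ y ≤ |y| ⬝ᵥ M *ᵥ |y| := by
  simp only [dotProduct, mulVec, Finset.mul_sum]
  refine Finset.sum_le_sum fun i _ => Finset.sum_le_sum fun j _ => ?_
  calc y i * (M i j * y j) ≤ |y i * (M i j * y j)| := le_abs_self _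
    _ = |y| i * (M i j * |y| j) := by
      rw [abs_mul, abs_mul, abs_of_nonneg (hM i j), Pi.abs_apply, Pi.abs_apply]

variable [DecidableEq V]

lemma exists_mulVec_eq_sSup_spectrum_smul [Nonempty V] (hM : M.IsHermitian) :
    ∃ y ≠ 0, M *ᵥ y = sSup (spectrum ℝ M) • y := by
  have hne : (spectrum ℝ M).Nonempty := by
    rw [hM.spectrum_real_eq_range_eigenvalues]
    exact Set.range_nonempty _
  have hmem : sSup (spectrum ℝ M) ∈ spectrum ℝ (Matrix.toLin' M) := by
    rw [Matrix.spectrum_toLin']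
    exact hne.csSup_mem Matrix.finite_real_spectrum
  obtain ⟨y, hy, hy0⟩ :=
    (Module.End.hasEigenvalue_iff_mem_spectrum.mpr hmem).exists_hasEigenvector
  exact ⟨y, hy0, by rwa [Module.End.mem_eigenspace_iff, Matrix.toLin'_apply] at hy⟩

lemma posSemidef_algebraMap_sSup_spectrum_sub (hM : M.IsHermitian) :
    (algebraMap ℝ (Matrix V V ℝ) (sSup (spectrum ℝ M)) - M).PosSemidef := by
  rw [Matrix.posSemidef_iff_isHermitian_and_spectrum_nonneg, ← spectrum.singleton_sub_eq,
    Set.singleton_sub]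
  refine ⟨?_, ?_⟩
  · rw [Matrix.algebraMap_eq_diagonal]
    exact (Matrix.isHermitian_diagonal _).sub hM
  · rintro _ ⟨l, hl, rfl⟩
    exact sub_nonneg.mpr (le_csSup Matrix.finite_real_spectrum.bddAbove hl)

lemma mulVec_eq_sSup_spectrum_smul_of_le (hM : M.IsHermitian) {x : V → ℝ}
    (hx : sSup (spectrum ℝ M) * (x ⬝ᵥ x) ≤ x ⬝ᵥ M *ᵥ x) :
    M *ᵥ x = sSup (spectrum ℝ M) • x := by
  have hpsd := posSemidef_algebraMap_sSup_spectrum_sub hM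
  have hsub : (algebraMap ℝ (Matrix V V ℝ) (sSup (spectrum ℝ M)) - M) *ᵥ x =
      sSup (spectrum ℝ M) • x - M *ᵥ x := by
    rw [sub_mulVec, Algebra.algebraMap_eq_smul_one, smul_mulVec, one_mulVec]
  have hzero :
      star x ⬝ᵥ ((algebraMap ℝ (Matrix V V ℝ) (sSup (spectrum ℝ M)) - M) *ᵥ x) = 0 := by
    refine le_antisymm ?_ (hpsd.dotProduct_mulVec_nonneg x)
    rw [hsub, star_trivial, dotProduct_sub, dotProduct_smul, smul_eq_mul]
    linarith
  rw [hpsd.dotProduct_mulVec_zero_iff, hsub, sub_eq_zero] at hzero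
  exact hzero.symm

theorem exists_nonneg_mulVec_eq_sSup_spectrum_smul [Nonempty V] (hM : M.IsHermitian)
    (hM' : ∀ i j, 0 ≤ M i j) :
    ∃ z, 0 ≤ z ∧ z ≠ 0 ∧ M *ᵥ z = sSup (spectrum ℝ M) • z := by
  obtain ⟨y, hy0, hy⟩ := exists_mulVec_eq_sSup_spectrum_smul hM
  refine ⟨|y|, abs_nonneg y, fun h => hy0 (by simpa using h),
    mulVec_eq_sSup_spectrum_smul_of_le hM ?_⟩
  calc sSup (spectrum ℝ M) * (|y| ⬝ᵥ |y|) = sSup (spectrum ℝ M) * (y ⬝ᵥ y) := by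
        simp [dotProduct]
    _ = y ⬝ᵥ M *ᵥ y := by rw [hy, dotProduct_smul, smul_eq_mul]
    _ ≤ |y| ⬝ᵥ M *ᵥ |y| := dotProduct_mulVec_le_abs hM' y

end SpectrumOfSymmetricMatrix

section Weights

variable {V : Type*} {G : SimpleGraph V} {s : Finset V} {x : V → ℝ} {r : ℝ}

/-- The total weight `∑ x w` over the neighbours `w` of `v` in `s`. For `x = 1` this is the number
of neighbours of `v` in `s`. -/
noncomputable def adjWeight (G : SimpleGraph V) (s : Finset V) (x : V → ℝ) (v : V) : ℝ :=
  ∑ w ∈ s with G.Adj v w, x w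

/-- The total weight `∑ x w` over the `w ∈ s` that are not adjacent to `v`; a `v ∈ s` counts as
not adjacent to itself. -/
noncomputable def nonadjWeight (G : SimpleGraph V) (s : Finset V) (x : V → ℝ) (v : V) : ℝ :=
  ∑ w ∈ s with ¬ G.Adj v w, x w

lemma adjWeight_add_nonadjWeight (v : V) :
    adjWeight G s x v + nonadjWeight G s x v = ∑ w ∈ s, x w :=
  Finset.sum_filter_add_sum_filter_not s (G.Adj v) x

lemma adjWeight_nonneg (hx : 0 ≤ x) (v : V) : 0 ≤ adjWeight G s x v :=
  Finset.sum_nonneg fun w _ => hx w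

lemma nonadjWeight_nonneg (hx : 0 ≤ x) (v : V) : 0 ≤ nonadjWeight G s x v :=
  Finset.sum_nonneg fun w _ => hx w

lemma sum_adjWeight_eq :
    ∑ v ∈ s, adjWeight G s x v = ∑ v ∈ s, adjWeight G s 1 v * x v := by
  simp only [adjWeight, Finset.sum_mul, Pi.one_apply, one_mul]
  refine Finset.sum_comm' fun v w => ?_
  simp only [Finset.mem_filter, G.adj_comm v w]
  tauto

lemma sum_adjWeight_one_mul_le {c : ℝ} (hc : ∀ v ∈ s, ∀ w ∈ s, G.Adj v w → c ≤ x v + x w) :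
    (∑ v ∈ s, adjWeight G s 1 v) * c ≤ 2 * ∑ v ∈ s, adjWeight G s 1 v * x v := by
  calc (∑ v ∈ s, adjWeight G s 1 v) * c
      = ∑ v ∈ s, ∑ w ∈ s with G.Adj v w, c := by simp [adjWeight, Finset.sum_mul]
    _ ≤ ∑ v ∈ s, ∑ w ∈ s with G.Adj v w, (x v + x w) := by
      refine Finset.sum_le_sum fun v hv => Finset.sum_le_sum fun w hw => ?_
      rw [Finset.mem_filter] at hw
      exact hc v hv w hw.1 hw.2
    _ = ∑ v ∈ s, adjWeight G s 1 v * x v + ∑ v ∈ s, adjWeight G s x v := by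
      simp [adjWeight, Finset.sum_add_distrib]
    _ = 2 * ∑ v ∈ s, adjWeight G s 1 v * x v := by rw [sum_adjWeight_eq, two_mul]

lemma sum_le_card_common_add_nonadjWeight (hx₀ : 0 ≤ x) (hx₁ : x ≤ 1) (v w : V) :
    ∑ z ∈ s, x z ≤
      #{z ∈ s | G.Adj v z ∧ G.Adj w z} + (nonadjWeight G s x v + nonadjWeight G s x w) := by
  simp only [nonadjWeight, Finset.sum_filter, ← Finset.sum_boole, ← Finset.sum_add_distrib]
  refine Finset.sum_le_sum fun z _ => ?_
  have hz₀ : 0 ≤ x z := hx₀ z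
  have hz₁ : x z ≤ 1 := hx₁ z
  split_ifs <;> first | tauto | linarith

variable [Fintype V]

/-- The booksize of `G` is at most `r`: the two ends of an edge have at most `r` common neighbours.
The bound is real so that it may be `2n/13`. -/
def BooksizeLE (G : SimpleGraph V) (r : ℝ) : Prop :=
  ∀ ⦃v w⦄, G.Adj v w → (#{z | G.Adj v z ∧ G.Adj w z} : ℝ) ≤ r

lemma BooksizeLE.card_le (hG : BooksizeLE G r) {v w : V} (hvw : G.Adj v w)
    (hs : ∀ z ∈ s, G.Adj v z ∧ G.Adj w z) : (#s : ℝ) ≤ r := by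
  refine le_trans (Nat.cast_le.mpr (Finset.card_le_card fun z hz => ?_)) (hG hvw)
  simpa using hs z hz

lemma BooksizeLE.one_le_of_not_isIndepSet (hG : BooksizeLE G r) {u : V}
    (hu : ¬ G.IsIndepSet (G.neighborFinset u : Set V)) : 1 ≤ r := by
  simp only [isIndepSet_iff, Set.Pairwise, not_forall, not_not] at hu
  obtain ⟨v, hv, w, hw, -, hvw⟩ := hu
  simp only [Finset.mem_coe, mem_neighborFinset] at hv hw
  simpa using hG.card_le hvw (s := {u}) (by simp [hv.symm, hw.symm])

lemma BooksizeLE.adjWeight_neighborFinset_le (hG : BooksizeLE G r) {u v : V}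
    (hv : v ∈ G.neighborFinset u) : adjWeight G (G.neighborFinset u) 1 v ≤ r := by
  rw [mem_neighborFinset] at hv
  simpa [adjWeight] using hG.card_le hv (s := {w ∈ G.neighborFinset u | G.Adj v w}) (by simp)

lemma BooksizeLE.sum_adjWeight_one_mul_sub_le_sum_mul (hG : BooksizeLE G r) (hx₀ : 0 ≤ x)
    (hx₁ : x ≤ 1) (s t : Finset V) :
    (∑ v ∈ s, adjWeight G s 1 v) * (∑ w ∈ t, x w - r) ≤
      2 * ∑ v ∈ s, adjWeight G s 1 v * nonadjWeight G t x v := by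
  refine sum_adjWeight_one_mul_le fun v _ w _ hvw => ?_
  have hcommon := hG.card_le hvw (s := {z ∈ t | G.Adj v z ∧ G.Adj w z}) (by simp)
  have hle := sum_le_card_common_add_nonadjWeight (G := G) (s := t) hx₀ hx₁ v w
  linarith

lemma BooksizeLE.sum_adjWeight_one_mul_sub_le_mul_sum (hG : BooksizeLE G r) (hx₀ : 0 ≤ x)
    (hx₁ : x ≤ 1) (hs : ∀ v ∈ s, adjWeight G s 1 v ≤ r) (t : Finset V) :
    (∑ v ∈ s, adjWeight G s 1 v) * (∑ w ∈ t, x w - r) ≤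
      2 * (r * ∑ v ∈ s, nonadjWeight G t x v) := by
  refine (hG.sum_adjWeight_one_mul_sub_le_sum_mul hx₀ hx₁ s t).trans ?_
  rw [Finset.mul_sum _ _ r]
  gcongr with v hv
  · exact nonadjWeight_nonneg hx₀ v
  · exact hs v hv

end Weights

section Arithmetic

/-- To be applied with `a` and `b` the sizes of `N(u)` and its complement, `S` the Perron weight of
the complement, `m` twice the number of edges inside `N(u)`, and `P`, `Q` the weights of the edges
inside and of the non-edges leaving `N(u)`. Both bounds `hP` and `hQ` are proportional to `m`, and
`m ≤ a * r` removes it. -/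
lemma eight_mul_mul_sub_le_sq {ρ r a b m S P Q : ℝ} (hr : r < ρ) (hm : 0 < m) (hmr : m ≤ a * r)
    (ha : 0 ≤ a) (hS : S ≤ b) (hab : a * b ≤ ρ ^ 2) (hρ : ρ ^ 2 = a * S + P - Q)
    (hP : 2 * (ρ - r) * P ≤ m * (S + r)) (hQ : m * (S - r) ≤ 2 * (r * Q)) :
    8 * ρ * (ρ - r) ≤ (a + b + r) ^ 2 := by
  have hr₀ : 0 < r := pos_of_mul_pos_right (hm.trans_le hmr) ha
  have haS : a * S ≤ a * b := mul_le_mul_of_nonneg_left hS ha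
  set c := r * (S + r) - (ρ - r) * (S - r) with hc
  have hPQ : 2 * r * (ρ - r) * (P - Q) ≤ m * c := by
    rw [hc]
    linear_combination r * hP + (ρ - r) * hQ
  have hc₀ : 0 ≤ c := by
    refine nonneg_of_mul_nonneg_right (le_trans ?_ hPQ) hm
    have : 0 ≤ P - Q := by linarith
    have : 0 < ρ - r := sub_pos.mpr hr
    positivity
  have hsq : 2 * (ρ - r) * (ρ ^ 2 - a * S) ≤ a * c := by
    refine le_of_mul_le_mul_left ?_ hr₀
    linear_combination hPQ + mul_le_mul_of_nonneg_right hmr hc₀ + 2 * r * (ρ - r) * hρ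
  have hmain : 2 * ρ * (ρ - r) ≤ a * (S + r) := by
    refine le_of_mul_le_mul_left ?_ (hr₀.trans hr)
    rw [hc] at hsq
    linear_combination hsq
  linear_combination 4 * hmain + 4 * haS + four_mul_le_sq_add a (b + r)

lemma sq_sub_one_le_four_mul_sq_div_four (n : ℕ) : (n : ℝ) ^ 2 - 1 ≤ 4 * (n ^ 2 / 4 : ℕ) := by
  have h : n ^ 2 ≤ 4 * (n ^ 2 / 4) + 1 := by
    obtain ⟨k, rfl | rfl⟩ := n.even_or_odd'
    · rw [mul_pow]
      omega
    · ring_nf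
      omega
  rw [sub_le_iff_le_add]
  exact_mod_cast h

lemma card_mul_card_compl_le {V : Type*} [Fintype V] [DecidableEq V] (s : Finset V) :
    #s * #sᶜ ≤ Fintype.card V ^ 2 / 4 := by
  rw [Nat.le_div_iff_mul_le four_pos, ← s.card_add_card_compl, mul_comm, ← mul_assoc]
  exact four_mul_le_sq_add _ _

lemma two_mul_div_thirteen_lt {n ρ : ℝ} (hn : 2 ≤ n) (hρ : 0 ≤ ρ) (h : n ^ 2 - 1 ≤ 4 * ρ ^ 2) :
    2 * n / 13 < ρ := by
  nlinarith

lemma sq_add_lt_eight_mul_mul_sub {n ρ : ℝ} (hn : 7 ≤ n) (hρ : 0 ≤ ρ)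
    (h : n ^ 2 - 1 ≤ 4 * ρ ^ 2) :
    (n + 2 * n / 13) ^ 2 < 8 * ρ * (ρ - 2 * n / 13) := by
  -- `32 / 65` lies just above the positive root of `8 * c * (c - 2 / 13) = (15 / 13) ^ 2`.
  have hρn : 32 / 65 * n ≤ ρ := by nlinarith
  nlinarith

end Arithmetic

section Perron

variable {V : Type*} [Fintype V] {G : SimpleGraph V} {s : Finset V} {x : V → ℝ} {u : V} {ρ r : ℝ}

/-- `x` is a nonnegative eigenvector of the adjacency matrix of `G` for the eigenvalue `ρ`, scaled
so that its largest entry is `x u = 1`. -/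
structure IsPerronVector (G : SimpleGraph V) (ρ : ℝ) (x : V → ℝ) (u : V) : Prop where
  nonneg : 0 ≤ x
  le_one : x ≤ 1
  apply_eq_one : x u = 1
  sum_neighborFinset : ∀ v, ∑ w ∈ G.neighborFinset v, x w = ρ * x v

theorem exists_isPerronVector {n : ℕ} (hn : 0 < n) (G : SimpleGraph (Fin n)) :
    ∃ x u, IsPerronVector G (adjSpectralRadius G) x u := by
  have : Nonempty (Fin n) := ⟨⟨0, hn⟩⟩
  have hG : (G.adjMatrix ℝ).IsHermitian := by
    rw [Matrix.IsHermitian, Matrix.conjTranspose_eq_transpose_of_trivial, transpose_adjMatrix]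
  obtain ⟨z, hz, hz0, hρ⟩ := exists_nonneg_mulVec_eq_sSup_spectrum_smul hG fun i j => by
    rw [adjMatrix_apply]
    split_ifs <;> norm_num
  obtain ⟨u, hu⟩ := Finite.exists_max z
  have hzu : 0 < z u := by
    obtain ⟨i, hi⟩ := Function.ne_iff.mp hz0
    exact ((hz i).lt_of_ne' hi).trans_le (hu i)
  refine ⟨fun v => z v / z u, u, fun v => div_nonneg (hz v) hzu.le,
    fun v => (div_le_one hzu).mpr (hu v), div_self hzu.ne', fun v => ?_⟩
  have hv := congrFun hρ v
  rw [adjMatrix_mulVec_apply, Pi.smul_apply, smul_eq_mul] at hv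
  rw [← Finset.sum_div, hv, mul_div_assoc, adjSpectralRadius]

namespace IsPerronVector

lemma sum_neighborFinset_self (h : IsPerronVector G ρ x u) : ∑ v ∈ G.neighborFinset u, x v = ρ := by
  rw [h.sum_neighborFinset, h.apply_eq_one, mul_one]

lemma eigenvalue_nonneg (h : IsPerronVector G ρ x u) : 0 ≤ ρ :=
  h.sum_neighborFinset_self ▸ Finset.sum_nonneg fun v _ => h.nonneg v

lemma eigenvalue_le_degree (h : IsPerronVector G ρ x u) : ρ ≤ G.degree u := by
  calc ρ = ∑ v ∈ G.neighborFinset u, x v := h.sum_neighborFinset_self.symm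
    _ ≤ ∑ v ∈ G.neighborFinset u, 1 := Finset.sum_le_sum fun v _ => h.le_one v
    _ = G.degree u := by simp

lemma eigenvalue_sq_eq (h : IsPerronVector G ρ x u) :
    ρ ^ 2 = ∑ v ∈ G.neighborFinset u, ρ * x v := by
  rw [← Finset.mul_sum, h.sum_neighborFinset_self, sq]

lemma eigenvalue_sq_le_sum_degree (h : IsPerronVector G ρ x u) :
    ρ ^ 2 ≤ ∑ v ∈ G.neighborFinset u, (G.degree v : ℝ) := by
  rw [h.eigenvalue_sq_eq]
  refine Finset.sum_le_sum fun v _ => ?_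
  calc ρ * x v = ∑ w ∈ G.neighborFinset v, x w := (h.sum_neighborFinset v).symm
    _ ≤ ∑ w ∈ G.neighborFinset v, 1 := Finset.sum_le_sum fun w _ => h.le_one w
    _ = G.degree v := by simp

lemma eigenvalue_sq_le_card_edgeFinset (h : IsPerronVector G ρ x u) {t : Finset V}
    (hG : G.IsBipartiteWith (G.neighborFinset u : Set V) t) : ρ ^ 2 ≤ #G.edgeFinset := by
  rw [← isBipartiteWith_sum_degrees_eq_card_edges hG, Nat.cast_sum]
  exact h.eigenvalue_sq_le_sum_degree

variable [DecidableEq V]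

lemma eigenvalue_mul_apply (h : IsPerronVector G ρ x u) (s : Finset V) (v : V) :
    ρ * x v = adjWeight G s x v + (∑ w ∈ sᶜ, x w - nonadjWeight G sᶜ x v) := by
  have hs : G.neighborFinset v = {w ∈ s | G.Adj v w} ∪ {w ∈ sᶜ | G.Adj v w} := by
    ext w
    by_cases hw : w ∈ s <;> simp [hw]
  have hdisj : Disjoint {w ∈ s | G.Adj v w} {w ∈ sᶜ | G.Adj v w} :=
    disjoint_compl_right.mono (Finset.filter_subset _ s) (Finset.filter_subset _ sᶜ)
  rw [← h.sum_neighborFinset, hs, Finset.sum_union hdisj,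
    ← adjWeight_add_nonadjWeight (G := G) (s := sᶜ) v, add_sub_cancel_right, adjWeight, adjWeight]

lemma eigenvalue_sq_eq_card_mul_card_compl (h : IsPerronVector G ρ x u)
    (hs : ∀ v w, G.Adj v w ↔ (v ∈ s ↔ w ∉ s)) :
    ρ ^ 2 = #s * #sᶜ := by
  have hs₀ : ∀ v ∈ s, G.neighborFinset v = sᶜ := fun v hv => by
    ext w
    simp [hs, hv]
  have hs₁ : ∀ v ∈ sᶜ, G.neighborFinset v = s := fun v hv => by
    rw [Finset.mem_compl] at hv
    ext w
    simp [hs, hv]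
  have sum_mul : ∀ t t' : Finset V, (∀ v ∈ t, G.neighborFinset v = t') →
      ρ * ∑ v ∈ t, x v = #t * ∑ w ∈ t', x w := fun t t' ht => by
    rw [Finset.mul_sum, Finset.sum_congr rfl fun v hv => by rw [← h.sum_neighborFinset, ht v hv],
      Finset.sum_const, nsmul_eq_mul]
  have hpos : 0 < ∑ v ∈ s, x v + ∑ v ∈ sᶜ, x v := by
    rw [Finset.sum_add_sum_compl]
    exact Finset.sum_pos' (fun v _ => h.nonneg v) ⟨u, Finset.mem_univ u, by simp [h.apply_eq_one]⟩
  refine mul_right_cancel₀ hpos.ne' ?_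
  linear_combination (ρ + #sᶜ) * sum_mul s sᶜ hs₀ + (ρ + #s) * sum_mul sᶜ s hs₁

lemma eigenvalue_sq_eq_add_sub (h : IsPerronVector G ρ x u) :
    ρ ^ 2 = #(G.neighborFinset u) * ∑ w ∈ (G.neighborFinset u)ᶜ, x w +
      ∑ v ∈ G.neighborFinset u, adjWeight G (G.neighborFinset u) x v -
      ∑ v ∈ G.neighborFinset u, nonadjWeight G (G.neighborFinset u)ᶜ x v := by
  rw [h.eigenvalue_sq_eq,
    Finset.sum_congr rfl fun v _ => h.eigenvalue_mul_apply (G.neighborFinset u) v,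
    Finset.sum_add_distrib, Finset.sum_sub_distrib, Finset.sum_const, nsmul_eq_mul]
  ring

lemma sub_mul_sum_adjWeight_le (h : IsPerronVector G ρ x u)
    (hG : BooksizeLE G r) (hs : ∀ v ∈ s, adjWeight G s 1 v ≤ r) :
    2 * (ρ - r) * ∑ v ∈ s, adjWeight G s x v ≤
      (∑ v ∈ s, adjWeight G s 1 v) * (∑ w ∈ sᶜ, x w + r) := by
  have hρ : ρ * ∑ v ∈ s, adjWeight G s x v =
      ∑ v ∈ s, adjWeight G s 1 v * adjWeight G s x v +
        ((∑ v ∈ s, adjWeight G s 1 v) * ∑ w ∈ sᶜ, x w -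
          ∑ v ∈ s, adjWeight G s 1 v * nonadjWeight G sᶜ x v) := by
    rw [sum_adjWeight_eq, Finset.mul_sum, Finset.sum_mul, ← Finset.sum_sub_distrib,
      ← Finset.sum_add_distrib]
    refine Finset.sum_congr rfl fun v _ => ?_
    linear_combination adjWeight G s 1 v * h.eigenvalue_mul_apply s v
  have hadj : ∑ v ∈ s, adjWeight G s 1 v * adjWeight G s x v ≤
      r * ∑ v ∈ s, adjWeight G s x v := by
    rw [Finset.mul_sum]
    gcongr with v hv
    · exact adjWeight_nonneg h.nonneg v
    · exact hs v hv
  have hnonadj := hG.sum_adjWeight_one_mul_sub_le_sum_mul h.nonneg h.le_one s sᶜ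
  linarith

theorem eight_mul_mul_sub_le_of_not_isIndepSet (h : IsPerronVector G ρ x u)
    (hG : BooksizeLE G r) (hr : r < ρ)
    (hmax : (#(G.neighborFinset u) * #(G.neighborFinset u)ᶜ : ℝ) ≤ ρ ^ 2)
    (hu : ¬ G.IsIndepSet (G.neighborFinset u : Set V)) :
    8 * ρ * (ρ - r) ≤ (Fintype.card V + r) ^ 2 := by
  set s := G.neighborFinset u
  have hsr : ∀ v ∈ s, adjWeight G s 1 v ≤ r := fun v hv => hG.adjWeight_neighborFinset_le hv
  have hpos : 0 < ∑ v ∈ s, adjWeight G s 1 v := by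
    simp only [isIndepSet_iff, Set.Pairwise, not_forall, not_not] at hu
    obtain ⟨v, hv, w, hw, -, hvw⟩ := hu
    refine Finset.sum_pos' (fun v _ => adjWeight_nonneg zero_le_one v) ⟨v, hv, ?_⟩
    exact Finset.sum_pos (fun _ _ => one_pos) ⟨w, Finset.mem_filter.mpr ⟨hw, hvw⟩⟩
  have hle : ∑ v ∈ s, adjWeight G s 1 v ≤ #s * r := by
    simpa using Finset.sum_le_sum hsr
  have hcompl : ∑ w ∈ sᶜ, x w ≤ #sᶜ := by
    simpa using Finset.sum_le_sum fun w (_ : w ∈ sᶜ) => h.le_one w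
  have hcard : (Fintype.card V : ℝ) = #s + #sᶜ := by
    exact_mod_cast (s.card_add_card_compl).symm
  rw [hcard]
  exact eight_mul_mul_sub_le_sq hr hpos hle (Nat.cast_nonneg _) hcompl hmax
    h.eigenvalue_sq_eq_add_sub (h.sub_mul_sum_adjWeight_le hG hsr)
    (hG.sum_adjWeight_one_mul_sub_le_mul_sum h.nonneg h.le_one hsr sᶜ)

theorem isIndepSet_neighborFinset (h : IsPerronVector G ρ x u)
    (hG : BooksizeLE G (2 * Fintype.card V / 13))
    (hr : 2 * Fintype.card V / 13 < ρ) (hρ : (Fintype.card V : ℝ) ^ 2 - 1 ≤ 4 * ρ ^ 2)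
    (hmax : (#(G.neighborFinset u) * #(G.neighborFinset u)ᶜ : ℝ) ≤ ρ ^ 2) :
    G.IsIndepSet (G.neighborFinset u : Set V) := by
  by_contra hu
  have hcard : (7 : ℝ) ≤ Fintype.card V := by
    have h1 := hG.one_le_of_not_isIndepSet hu
    rw [le_div_iff₀' (by norm_num)] at h1
    norm_cast at h1 ⊢
    omega
  exact (sq_add_lt_eight_mul_mul_sub hcard h.eigenvalue_nonneg hρ).not_ge
    (h.eight_mul_mul_sub_le_of_not_isIndepSet hG hr hmax hu)

lemma neighborFinset_eq_compl_of_isIndepSet (h : IsPerronVector G ρ x u)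
    (hmax : (#(G.neighborFinset u) * #(G.neighborFinset u)ᶜ : ℝ) ≤ ρ ^ 2)
    (hu : G.IsIndepSet (G.neighborFinset u : Set V)) :
    ∀ v ∈ G.neighborFinset u, G.neighborFinset v = (G.neighborFinset u)ᶜ := by
  have hsub : ∀ v ∈ G.neighborFinset u, G.neighborFinset v ⊆ (G.neighborFinset u)ᶜ :=
    fun v hv w hw => Finset.mem_compl.mpr fun hwu => by
      rw [mem_neighborFinset] at hw
      exact hu hv hwu hw.ne hw
  have hle : ∀ v ∈ G.neighborFinset u, G.degree v ≤ #(G.neighborFinset u)ᶜ :=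
    fun v hv => Finset.card_le_card (hsub v hv)
  have hsum : ∑ _ ∈ G.neighborFinset u, #(G.neighborFinset u)ᶜ ≤
      ∑ v ∈ G.neighborFinset u, G.degree v := by
    rw [Finset.sum_const, smul_eq_mul]
    exact_mod_cast hmax.trans h.eigenvalue_sq_le_sum_degree
  have heq := (Finset.sum_eq_sum_iff_of_le hle).mp ((Finset.sum_le_sum hle).antisymm hsum)
  exact fun v hv => Finset.eq_of_subset_of_card_le (hsub v hv) (heq v hv).ge

theorem isBipartiteWith_neighborFinset_compl_of_isIndepSet (h : IsPerronVector G ρ x u)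
    (hG : BooksizeLE G r) (hr : r < ρ)
    (hmax : (#(G.neighborFinset u) * #(G.neighborFinset u)ᶜ : ℝ) ≤ ρ ^ 2)
    (hu : G.IsIndepSet (G.neighborFinset u : Set V)) :
    G.IsBipartiteWith (G.neighborFinset u : Set V) ((G.neighborFinset u)ᶜ : Finset V) := by
  set s := G.neighborFinset u
  have hadj : ∀ v ∈ s, ∀ w ∉ s, G.Adj w v := fun v hv w hw => by
    rwa [G.adj_comm, ← mem_neighborFinset, h.neighborFinset_eq_compl_of_isIndepSet hmax hu v hv,
      Finset.mem_compl]
  have hcompl : ∀ v ∉ s, ∀ w ∉ s, ¬ G.Adj v w := fun v hv w hw hvw => by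
    have hsr : (#s : ℝ) ≤ r := hG.card_le hvw fun z hz => ⟨hadj z hz v hv, hadj z hz w hw⟩
    exact (hr.trans_le h.eigenvalue_le_degree).not_ge hsr
  refine ⟨Finset.disjoint_coe.mpr disjoint_compl_right, fun v w hvw => ?_⟩
  simp only [Finset.mem_coe, Finset.mem_compl]
  by_cases hv : v ∈ s <;> by_cases hw : w ∈ s
  · exact absurd hvw (hu hv hw hvw.ne)
  · exact .inl ⟨hv, hw⟩
  · exact .inr ⟨hv, hw⟩
  · exact absurd hvw (hcompl v hv w hw)

end IsPerronVector

end Perron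

section Turan

lemma card_edgeFinset_eq_card_mul_card_compl {V : Type*} [Fintype V] [DecidableEq V]
    {G : SimpleGraph V} [DecidableRel G.Adj] {s : Finset V}
    (hs : ∀ v w, G.Adj v w ↔ (v ∈ s ↔ w ∉ s)) : #G.edgeFinset = #s * #sᶜ := by
  have hG : G.IsBipartiteWith (s : Set V) (sᶜ : Finset V) := by
    refine ⟨Finset.disjoint_coe.mpr disjoint_compl_right, fun v w hvw => ?_⟩
    simp only [Finset.mem_coe, Finset.mem_compl]
    have := (hs v w).mp hvw
    tauto
  have hdeg : ∀ v ∈ s, G.degree v = #sᶜ := fun v hv => by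
    rw [← card_neighborFinset_eq_degree]
    congr 1
    ext w
    simp [hs, hv]
  rw [← isBipartiteWith_sum_degrees_eq_card_edges hG, Finset.sum_congr rfl hdeg,
    Finset.sum_const, smul_eq_mul]

lemma card_edgeFinset_turanGraph_two (n : ℕ) : #(turanGraph n 2).edgeFinset = n ^ 2 / 4 := by
  rw [card_edgeFinset_turanGraph]
  obtain ⟨k, rfl | rfl⟩ := n.even_or_odd'
  · simp
  · have hk : (2 * k + 1) ^ 2 = 4 * (k ^ 2 + k) + 1 := by ring
    have hmod : (2 * k + 1) % 2 = 1 := by omega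
    simp only [hk, hmod, one_pow, add_tsub_cancel_right, Nat.add_one_sub_one, mul_one,
      Nat.reduceMul, ne_eq, OfNat.ofNat_ne_zero, not_false_eq_true, mul_div_cancel_left₀,
      Nat.choose_succ_self, add_zero]
    omega

lemma nonempty_iso_turanGraph_two_of_le_card_edgeFinset {n : ℕ} {G : SimpleGraph (Fin n)}
    (hG : G.CliqueFree 3) (he : n ^ 2 / 4 ≤ #G.edgeFinset) : Nonempty (G ≃g turanGraph n 2) := by
  have hmax : G.IsTuranMaximal 2 := by
    refine ⟨hG, fun H _ hH => ?_⟩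
    rw [← card_edgeFinset_turanGraph_two, card_edgeFinset_turanGraph] at he
    simpa using hH.card_edgeFinset_le.trans (by simpa using he)
  have hiso := hmax.nonempty_iso_turanGraph
  rwa [Fintype.card_fin] at hiso

theorem adjSpectralRadius_turanGraph_two_sq {n : ℕ} (hn : 0 < n) :
    adjSpectralRadius (turanGraph n 2) ^ 2 = (n ^ 2 / 4 : ℕ) := by
  obtain ⟨x, u, h⟩ := exists_isPerronVector hn (turanGraph n 2)
  let s : Finset (Fin n) := {v | v.1 % 2 = 0}
  have hs : ∀ v w, (turanGraph n 2).Adj v w ↔ (v ∈ s ↔ w ∉ s) := fun v w => by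
    simp only [s, turanGraph_adj, Finset.mem_filter_univ]
    omega
  rw [h.eigenvalue_sq_eq_card_mul_card_compl hs, ← card_edgeFinset_turanGraph_two,
    card_edgeFinset_eq_card_mul_card_compl hs, Nat.cast_mul]

lemma sq_div_four_le_adjSpectralRadius_sq {n : ℕ} (hn : 0 < n) {G : SimpleGraph (Fin n)}
    (hρ : adjSpectralRadius (turanGraph n 2) ≤ adjSpectralRadius G) :
    (n ^ 2 / 4 : ℕ) ≤ adjSpectralRadius G ^ 2 := by
  obtain ⟨x, u, h⟩ := exists_isPerronVector hn (turanGraph n 2)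
  rw [← adjSpectralRadius_turanGraph_two_sq hn]
  exact pow_le_pow_left₀ h.eigenvalue_nonneg hρ 2

end Turan

lemma contains_book_card_common {V : Type*} [Fintype V] {G : SimpleGraph V} {u v : V}
    (huv : G.Adj u v) : Contains G (book #{w | G.Adj u w ∧ G.Adj v w}) := by
  let e := ({w | G.Adj u w ∧ G.Adj v w} : Finset V).equivFin
  have he : ∀ i, G.Adj u (e.symm i).1 ∧ G.Adj v (e.symm i).1 := fun i =>
    (Finset.mem_filter.mp (e.symm i).2).2
  let f : Fin 2 ⊕ Fin _ → V := Sum.elim ![u, v] fun i => (e.symm i).1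
  have hf : f.Injective := by
    refine Function.Injective.sumElim ?_ (Subtype.val_injective.comp e.symm.injective) ?_
    · simp [Function.Injective, Fin.forall_fin_two, huv.ne, huv.ne']
    · exact Fin.forall_fin_two.mpr ⟨fun i => (he i).1.ne, fun i => (he i).2.ne⟩
  have hadj : ∀ i, ∀ b, .inl i ≠ b → G.Adj (f (.inl i)) (f b) := by
    rintro i (j | j) hij
    · fin_cases i <;> fin_cases j <;> simp_all [f, huv.symm]
    · fin_cases i
      exacts [(he j).1, (he j).2]
  refine ⟨⟨f, hf⟩, fun a b hab => ?_⟩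
  obtain ⟨hne, ha | hb⟩ := (fromRel_adj _ _ _).mp hab
  · obtain ⟨i, rfl⟩ := Sum.isLeft_iff.mp ha
    exact hadj i b hne
  · obtain ⟨i, rfl⟩ := Sum.isLeft_iff.mp hb
    exact (hadj i a hne.symm).symm

theorem nonempty_iso_turanGraph_two_of_booksizeLE {n : ℕ} {G : SimpleGraph (Fin n)}
    (hG : BooksizeLE G (2 * n / 13))
    (hρ : adjSpectralRadius (turanGraph n 2) ≤ adjSpectralRadius G) :
    Nonempty (G ≃g turanGraph n 2) := by
  obtain hn | hn := lt_or_ge n 2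
  · have : Subsingleton (Fin n) := Fin.subsingleton_iff_le_one.mpr (by omega)
    rw [Subsingleton.elim G (turanGraph n 2)]
    exact ⟨Iso.refl⟩
  obtain ⟨x, u, h⟩ := exists_isPerronVector (by omega) G
  have hsq := sq_div_four_le_adjSpectralRadius_sq (by omega) hρ
  have hn' : (n : ℝ) ^ 2 - 1 ≤ 4 * adjSpectralRadius G ^ 2 :=
    (sq_sub_one_le_four_mul_sq_div_four n).trans (by gcongr)
  have hr : 2 * n / 13 < adjSpectralRadius G :=
    two_mul_div_thirteen_lt (by exact_mod_cast hn) h.eigenvalue_nonneg hn'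
  have hmax : (#(G.neighborFinset u) * #(G.neighborFinset u)ᶜ : ℝ) ≤ adjSpectralRadius G ^ 2 := by
    refine le_trans ?_ hsq
    have hle := card_mul_card_compl_le (G.neighborFinset u)
    rw [Fintype.card_fin] at hle
    exact_mod_cast hle
  have hindep := h.isIndepSet_neighborFinset (by rwa [Fintype.card_fin])
    (by rwa [Fintype.card_fin]) (by rwa [Fintype.card_fin]) hmax
  have hbip := h.isBipartiteWith_neighborFinset_compl_of_isIndepSet hG hr hmax hindep
  have hedge : n ^ 2 / 4 ≤ #G.edgeFinset := by
    exact_mod_cast hsq.trans (h.eigenvalue_sq_le_card_edgeFinset hbip)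
  exact nonempty_iso_turanGraph_two_of_le_card_edgeFinset
    (hbip.isBipartite.cliqueFree (by norm_num)) hedge

/-- Corollary 1.5: a graph on `n` vertices with `ρ(G) ≥ ρ(T_{n,2})` which is not
isomorphic to `T_{n,2}` has booksize greater than `n/6.5`, i.e. it contains `B_s`
for some `s > 2n/13`. -/
theorem stmt2 (n : ℕ) (hn : 0 < n) (G : SimpleGraph (Fin n))
    (hρ : adjSpectralRadius (turanGraph n 2) ≤ adjSpectralRadius G)
    (hiso : ¬ Nonempty (G ≃g turanGraph n 2)) :
    ∃ s : ℕ, 2 * n < 13 * s ∧ Contains G (book s) := by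
  by_contra hcon
  have hG : BooksizeLE G (2 * n / 13) := fun v w hvw => by
    have hle : 13 * #{z | G.Adj v z ∧ G.Adj w z} ≤ 2 * n :=
      not_lt.mp fun hlt => hcon ⟨_, hlt, contains_book_card_common hvw⟩
    rw [le_div_iff₀' (by norm_num)]
    exact_mod_cast hle
  exact hiso (nonempty_iso_turanGraph_two_of_booksizeLE hG hρ)
end

section
/- Let r ≥ 1 be an odd integer and let n ≥ 10r. If G is a θ_{r+1}-free graph on n vertices, then ρ(G) ≤ ρ(T_{n,2}), with equality if and only if G is isomorphic to the Turán graph T_{n,2}. -/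
open SimpleGraph Finset

attribute [local instance] Classical.propDecidable

/-!
Let `u` maximise the absolute value of an eigenvector for an eigenvalue `ρ ≥ √⌊n² / 4⌋`. Counting
walks of length two from `u` shows that `∑ v ∈ N(u), d(v) ≥ ⌊n² / 4⌋`. Write `r = 2m + 1`.

Delete vertices until those left in `A ⊆ N(u)` and `B ⊆ V \ N[u]` have many neighbours across. Then
alternating paths of every even length up to `2m` exist between `A` and `B`, and together with the
hub `u` they close up to a copy of `θ_{r+1}` unless `A` spans almost no edges and a matched vertex
of `A` misses much of `B`. Vertices outside the core contribute little since a `θ_{r+1}`-free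
neighbourhood is `r`-degenerate. Comparing with `⌊n² / 4⌋` leaves only the case where `N(u)` is
independent, and then the degree sum is at most `⌊n² / 4⌋`.

In the case of equality the eigenvector has constant modulus on the walks of length two from `u`, so
the neighbourhoods of all their endpoints are independent too. This makes the graph bipartite with
`⌊n² / 4⌋` edges, hence Turán-maximal.
-/

section Counting

variable {V : Type*} {G : SimpleGraph V} {v : V} {s t : Finset V}

/-- The number `d_S(v)` of neighbours of `v` in `S`, where `v` itself need not lie in `S`. -/
noncomputable def degreeIn (G : SimpleGraph V) (v : V) (S : Finset V) : ℕ :=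
  #{w ∈ S | G.Adj v w}

lemma degreeIn_le_card : degreeIn G v s ≤ #s := card_filter_le _ _

lemma degreeIn_pos : 0 < degreeIn G v s ↔ ∃ w ∈ s, G.Adj v w := by
  simp only [degreeIn, card_pos, filter_nonempty_iff]

lemma degreeIn_union (h : Disjoint s t) :
    degreeIn G v (s ∪ t) = degreeIn G v s + degreeIn G v t := by
  rw [degreeIn, filter_union, card_union_of_disjoint (disjoint_filter_filter h)]
  rfl

lemma degreeIn_insert_self : degreeIn G v (insert v s) = degreeIn G v s := by
  simp [degreeIn, filter_insert]

lemma degreeIn_insert_of_adj {w : V} (hvw : G.Adj v w) (hw : w ∉ s) :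
    degreeIn G v (insert w s) = degreeIn G v s + 1 := by
  rw [degreeIn, filter_insert, if_pos hvw, card_insert_of_notMem fun h => hw (mem_filter.1 h).1]
  rfl

lemma exists_adj_notMem (X : Finset V) (h : #(X ∩ s) < degreeIn G v s) :
    ∃ w ∈ s, G.Adj v w ∧ w ∉ X := by
  obtain ⟨w, hw, hwX⟩ := exists_mem_notMem_of_card_lt_card h
  rw [mem_filter] at hw
  exact ⟨w, hw.1, hw.2, fun hX => hwX (mem_inter.2 ⟨hX, hw.1⟩)⟩

lemma exists_common_adj_notMem {w : V} (X : Finset V)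
    (h : #s + #(X ∩ s) < degreeIn G v s + degreeIn G w s) :
    ∃ x ∈ s, G.Adj v x ∧ G.Adj w x ∧ x ∉ X := by
  have hsum := card_union_add_card_inter {x ∈ s | G.Adj v x} {x ∈ s | G.Adj w x}
  have hunion : #({x ∈ s | G.Adj v x} ∪ {x ∈ s | G.Adj w x}) ≤ #s :=
    card_le_card (union_subset (filter_subset _ _) (filter_subset _ _))
  have hlt : #(X ∩ s) < #({x ∈ s | G.Adj v x} ∩ {x ∈ s | G.Adj w x}) := by
    unfold degreeIn at h
    omega
  obtain ⟨x, hx, hxX⟩ := exists_mem_notMem_of_card_lt_card hlt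
  simp only [mem_inter, mem_filter] at hx hxX
  exact ⟨x, hx.1.1, hx.1.2, hx.2.2, fun h => hxX ⟨h, hx.1.1⟩⟩

lemma ordPairs_eq_sum : ordPairs G s t = ∑ v ∈ s, degreeIn G v t := by
  simp only [ordPairs, degreeIn, card_filter, sum_product]

lemma ordPairs_comm (G : SimpleGraph V) (s t : Finset V) : ordPairs G s t = ordPairs G t s := by
  simp only [ordPairs, card_filter, sum_product_right (s := s), sum_product (s := t), G.adj_comm]

lemma ordPairs_insert_left (hv : v ∉ s) :
    ordPairs G (insert v s) t = degreeIn G v t + ordPairs G s t := by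
  simp only [ordPairs_eq_sum, sum_insert hv]

lemma ordPairs_insert_right (hv : v ∉ t) :
    ordPairs G s (insert v t) = degreeIn G v s + ordPairs G s t := by
  rw [ordPairs_comm, ordPairs_insert_left hv, ordPairs_comm]

lemma ordPairs_insert_insert (hv : v ∉ s) :
    ordPairs G (insert v s) (insert v s) = ordPairs G s s + 2 * degreeIn G v s := by
  rw [ordPairs_insert_left hv, ordPairs_insert_right hv, degreeIn_insert_self]
  ring

lemma ordPairs_le_card_mul_card (G : SimpleGraph V) (s t : Finset V) :
    ordPairs G s t ≤ #s * #t :=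
  (card_filter_le _ _).trans_eq (card_product s t)

lemma ordPairs_eq_card_mul_card_iff :
    ordPairs G s t = #s * #t ↔ ∀ a ∈ s, ∀ b ∈ t, G.Adj a b := by
  rw [ordPairs, ← card_product, card_filter_eq_iff]
  simp only [mem_product, and_imp, Prod.forall]
  grind

lemma ordPairs_eq_zero_iff : ordPairs G s t = 0 ↔ ∀ a ∈ s, ∀ b ∈ t, ¬ G.Adj a b := by
  simp only [ordPairs, card_eq_zero, filter_eq_empty_iff, mem_product, and_imp, Prod.forall]
  grind

lemma ordPairs_self_le_of_peeling {Q : Finset V} {k : ℕ} (hQs : Q ⊆ s)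
    (hpeel : ∀ S, Q ⊂ S → S ⊆ s → ∃ v ∈ S \ Q, degreeIn G v S ≤ k) :
    ordPairs G s s ≤ ordPairs G Q Q + 2 * k * #(s \ Q) := by
  induction s using Finset.strongInduction with
  | H s ih =>
    rcases hQs.eq_or_ssubset with rfl | hss
    · simp
    obtain ⟨v, hv, hdeg⟩ := hpeel s hss subset_rfl
    obtain ⟨hvs, hvQ⟩ := mem_sdiff.1 hv
    obtain ⟨S, hvS, rfl⟩ : ∃ S, v ∉ S ∧ insert v S = s :=
      ⟨s.erase v, notMem_erase v s, insert_erase hvs⟩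
    have hQS : Q ⊆ S := fun x hx =>
      (mem_insert.1 (hQs hx)).resolve_left fun h => hvQ (h ▸ hx)
    have hrec := ih S (ssubset_insert hvS) hQS fun T hQT hTS =>
      hpeel T hQT (hTS.trans (subset_insert v S))
    rw [degreeIn_insert_self] at hdeg
    rw [ordPairs_insert_insert hvS, insert_sdiff_of_notMem _ hvQ,
      card_insert_of_notMem fun h => hvS (mem_sdiff.1 h).1]
    linarith

/-- A bipartite analogue of a `k`-core: every vertex of `A` has more than `a` neighbours in `B`,
and every vertex of `B` has more than `b` neighbours in `A`. -/
structure IsCore (G : SimpleGraph V) (a b : ℕ) (A B : Finset V) : Prop where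
  left : ∀ v ∈ A, a < degreeIn G v B
  right : ∀ v ∈ B, b < degreeIn G v A

lemma exists_isCore (G : SimpleGraph V) (a b : ℕ) (s t : Finset V) :
    ∃ A ⊆ s, ∃ B ⊆ t, IsCore G a b A B ∧
      ordPairs G s t ≤ ordPairs G A B + a * #(s \ A) + b * #(t \ B) := by
  induction hk : #s + #t generalizing s t with
  | zero =>
    exact ⟨s, subset_rfl, t, subset_rfl,
      ⟨by simp_all, by simp_all⟩, by simp⟩
  | succ k ih =>
    by_cases hs : ∃ v ∈ s, degreeIn G v t ≤ a
    · obtain ⟨v, hv, hdeg⟩ := hs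
      obtain ⟨s, hvs, rfl⟩ : ∃ S, v ∉ S ∧ insert v S = s :=
        ⟨s.erase v, notMem_erase v s, insert_erase hv⟩
      rw [card_insert_of_notMem hvs] at hk
      obtain ⟨A, hA, B, hB, hcore, hle⟩ := ih s t (by omega)
      refine ⟨A, hA.trans (subset_insert v s), B, hB, hcore, ?_⟩
      rw [ordPairs_insert_left hvs, insert_sdiff_of_notMem _ fun h => hvs (hA h),
        card_insert_of_notMem fun h => hvs (mem_sdiff.1 h).1]
      linarith
    by_cases ht : ∃ v ∈ t, degreeIn G v s ≤ b
    · obtain ⟨v, hv, hdeg⟩ := ht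
      obtain ⟨t, hvt, rfl⟩ : ∃ T, v ∉ T ∧ insert v T = t :=
        ⟨t.erase v, notMem_erase v t, insert_erase hv⟩
      rw [card_insert_of_notMem hvt] at hk
      obtain ⟨A, hA, B, hB, hcore, hle⟩ := ih s t (by omega)
      refine ⟨A, hA, B, hB.trans (subset_insert v t), hcore, ?_⟩
      rw [ordPairs_insert_right hvt, insert_sdiff_of_notMem _ fun h => hvt (hB h),
        card_insert_of_notMem fun h => hvt (mem_sdiff.1 h).1]
      linarith
    push Not at hs ht
    exact ⟨s, subset_rfl, t, subset_rfl, ⟨hs, ht⟩, by simp⟩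

end Counting

section Theta

variable {V : Type*} {G : SimpleGraph V} {a b c : V}

lemma contains_theta_of_isPath {r : ℕ} {p : G.Walk a b} (hp : p.IsPath) (hlen : p.length = r + 1)
    (hab : G.Adj a b) (hca : G.Adj c a) (hcb : G.Adj c b) (hc : c ∉ p.support) :
    Contains G (theta r) := by
  have hne : ∀ i, p.getVert i ≠ c := fun i h => hc (h ▸ p.getVert_mem_support i)
  let f : Fin (r + 3) → V := fun i => if i.val ≤ r + 1 then p.getVert i else c
  have hf : Function.Injective f := by
    intro i j hij
    simp only [f] at hij
    split_ifs at hij with hi hj hj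
    · exact Fin.ext (hp.getVert_injOn (by simpa [hlen] using hi) (by simpa [hlen] using hj) hij)
    · exact absurd hij (hne _)
    · exact absurd hij.symm (hne _)
    · omega
  have hadj : ∀ i j : Fin (r + 3), ((i.val + 1 = j.val ∧ j.val ≤ r + 1) ∨
      (i.val = 0 ∧ j.val = r + 1) ∨ (i.val = r + 2 ∧ (j.val = 0 ∨ j.val = r + 1))) →
      G.Adj (f i) (f j) := by
    have hend : p.getVert (r + 1) = b := hlen ▸ p.getVert_length
    rintro ⟨i, hi⟩ ⟨j, hj⟩ (⟨rfl, h⟩ | ⟨rfl, rfl⟩ | ⟨rfl, rfl | rfl⟩)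
    · have hir : i ≤ r := Nat.le_of_succ_le_succ h
      simpa [f, hir, hir.trans r.le_succ] using p.adj_getVert_succ (i := i) (by omega)
    · simpa [f, hend] using hab
    · simpa [f] using hca
    · simpa [f, hend] using hcb
  exact ⟨⟨f, hf⟩, fun i j hij => ((fromRel_adj _ _ _).1 hij).2.elim (hadj i j)
    fun h => (hadj j i h).symm⟩

/-- Closing the path up with `u`: all its edges but the first, followed by `u`, form the long path
of the theta graph, and the first vertex is the apex of the triangle. -/
lemma length_ne_of_theta_free {r : ℕ} {u : V} (hfree : ¬ Contains G (theta r)) {p : G.Walk a b}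
    (hp : p.IsPath) (hu : ∀ x ∈ p.support, G.Adj u x) : p.length ≠ r + 1 := by
  cases p with
  | nil => simp
  | @cons _ c _ hac q =>
    rw [Walk.cons_isPath_iff] at hp
    have huq : u ∉ q.support := fun h => G.irrefl (hu u (by simp [h]))
    have huc : G.Adj u c := hu c (by simp)
    have hua : G.Adj u a := hu a (by simp)
    intro hlen
    refine hfree (contains_theta_of_isPath (p := q.concat (hu b (by simp)).symm)
      (c := a) ((Walk.concat_isPath_iff _).2 ⟨hp.1, huq⟩) ?_ huc.symm hac hua.symm ?_)
    · simpa using hlen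
    · simp [Walk.support_concat, hp.2, hua.ne']

lemma card_support_toFinset_le (p : G.Walk a b) : #p.support.toFinset ≤ p.length + 1 :=
  (List.toFinset_card_le _).trans_eq p.length_support

lemma exists_isPath_length_eq_of_le_degreeIn {s : Finset V} {k : ℕ} (hs : s.Nonempty)
    (hdeg : ∀ v ∈ s, k ≤ degreeIn G v s) :
    ∃ (a b : V) (p : G.Walk a b), p.IsPath ∧ p.length = k ∧ ∀ x ∈ p.support, x ∈ s := by
  suffices ∀ j ≤ k, ∃ (a b : V) (p : G.Walk a b), p.IsPath ∧ p.length = j ∧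
      ∀ x ∈ p.support, x ∈ s from this k le_rfl
  intro j
  induction j with
  | zero =>
    obtain ⟨a, ha⟩ := hs
    exact fun _ => ⟨a, a, .nil, .nil, rfl, by simpa using ha⟩
  | succ j ih =>
    intro hj
    obtain ⟨a, b, p, hp, hlen, hps⟩ := ih (by omega)
    have hcard : #(p.support.toFinset.erase a ∩ s) < degreeIn G a s := by
      have h₁ := card_le_card (inter_subset_left (s₁ := p.support.toFinset.erase a) (s₂ := s))
      have h₂ := card_erase_of_mem (List.mem_toFinset.2 p.start_mem_support)
      have h₃ := card_support_toFinset_le p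
      have h₄ := hdeg a (hps a p.start_mem_support)
      omega
    obtain ⟨c, hcs, hac, hc⟩ := exists_adj_notMem _ hcard
    have hcp : c ∉ p.support := fun h => hc (mem_erase.2 ⟨hac.ne', List.mem_toFinset.2 h⟩)
    refine ⟨c, b, .cons hac.symm p, hp.cons hcp, by simp [hlen], ?_⟩
    simpa [hcs] using hps

lemma exists_degreeIn_le_of_theta_free {r : ℕ} {u : V} {s : Finset V}
    (hfree : ¬ Contains G (theta r)) (hs : s.Nonempty) (hu : ∀ x ∈ s, G.Adj u x) :
    ∃ v ∈ s, degreeIn G v s ≤ r := by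
  by_contra! hdeg
  obtain ⟨a, b, p, hp, hlen, hps⟩ := exists_isPath_length_eq_of_le_degreeIn hs hdeg
  exact length_ne_of_theta_free hfree hp (fun x hx => hu x (hps x hx)) hlen

lemma ordPairs_self_le_of_theta_free {r : ℕ} {u : V} {N Q : Finset V}
    (hfree : ¬ Contains G (theta r)) (hN : ∀ x ∈ N, G.Adj u x) (hQN : Q ⊆ N)
    (hQ : ∀ v ∈ N \ Q, (∃ w ∈ Q, G.Adj v w) → degreeIn G v N ≤ r) :
    ordPairs G N N ≤ ordPairs G Q Q + 2 * r * #(N \ Q) := by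
  refine ordPairs_self_le_of_peeling hQN fun S hQS hSN => ?_
  obtain ⟨v, hv, hdeg⟩ := exists_degreeIn_le_of_theta_free hfree
    (sdiff_nonempty.2 (not_subset_of_ssubset hQS)) fun x hx => hN x (hSN (mem_sdiff.1 hx).1)
  refine ⟨v, hv, ?_⟩
  by_cases hvQ : ∃ w ∈ Q, G.Adj v w
  · exact (card_le_card (filter_subset_filter _ hSN)).trans
      (hQ v (sdiff_subset_sdiff hSN subset_rfl hv) hvQ)
  · have hzero : degreeIn G v Q = 0 := Nat.eq_zero_of_not_pos (degreeIn_pos.not.2 hvQ)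
    rwa [← sdiff_union_of_subset hQS.subset, degreeIn_union sdiff_disjoint, hzero]

lemma degreeIn_le_one_of_theta_one_free {u v : V} {N : Finset V} (hfree : ¬ Contains G (theta 1))
    (hN : ∀ x ∈ N, G.Adj u x) (hv : v ∈ N) : degreeIn G v N ≤ 1 := by
  by_contra! hdeg
  obtain ⟨a, ha, b, hb, hab⟩ := one_lt_card.1 hdeg
  rw [mem_filter] at ha hb
  refine length_ne_of_theta_free hfree (p := .cons ha.2.symm (.cons hb.2 .nil)) (u := u) ?_ ?_ rfl
  · simp [hab, ha.2.ne', hb.2.ne]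
  · simp [hN, ha.1, hb.1, hv]

end Theta

section AlternatingPaths

variable {V : Type*} {G : SimpleGraph V} {m : ℕ} {A B : Finset V}

lemma IsCore.exists_alternating_isPath (hcore : IsCore G m (2 * m + 1) A B) (hAB : Disjoint A B)
    {v z b : V} (hv : v ∈ A) (hb : b ∉ B) {q : G.Walk v z} (hq : q.IsPath) (hlen : q.length ≤ 1)
    (hqB : ∀ y ∈ q.support, y ∉ B) {j : ℕ} (hj : j ≤ m) :
    ∃ x ∈ A, ∃ p : G.Walk x z, p.IsPath ∧ p.length = q.length + 2 * j ∧
      #(p.support.toFinset ∩ B) ≤ j ∧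
      ∀ y ∈ p.support, y ∈ q.support ∨ y ≠ b ∧ (y ∈ A ∨ y ∈ B) := by
  induction j with
  | zero =>
    refine ⟨v, hv, q, hq, rfl, ?_, fun y hy => .inl hy⟩
    rw [Nat.le_zero, card_eq_zero, ← disjoint_iff_inter_eq_empty, Finset.disjoint_left]
    simpa using hqB
  | succ j ih =>
    obtain ⟨x, hx, p, hp, hplen, hpB, hpsupp⟩ := ih (by omega)
    obtain ⟨s, hsB, hxs, hsp⟩ := exists_adj_notMem p.support.toFinset
      (hpB.trans_lt ((Nat.lt_of_succ_le hj).trans (hcore.left x hx)))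
    have hcard : #(insert b p.support.toFinset ∩ A) < degreeIn G s A := by
      have h₁ := card_le_card (inter_subset_left (s₁ := insert b p.support.toFinset) (s₂ := A))
      have h₂ := card_insert_le b p.support.toFinset
      have h₃ := card_support_toFinset_le p
      have h₄ := hcore.right s hsB
      omega
    obtain ⟨y, hyA, hsy, hyp⟩ := exists_adj_notMem _ hcard
    simp only [mem_insert, List.mem_toFinset, not_or] at hyp hsp
    refine ⟨y, hyA, .cons hsy.symm (.cons hxs.symm p), ?_, ?_, ?_, ?_⟩
    · simp [hp, hsp, hyp.2, hsy.ne']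
    · simp only [Walk.length_cons]
      omega
    · have hyB : y ∉ B := Finset.disjoint_left.1 hAB hyA
      rw [Walk.support_cons, Walk.support_cons, List.toFinset_cons, List.toFinset_cons,
        insert_inter_of_notMem hyB, insert_inter_of_mem hsB]
      exact (card_insert_le _ _).trans (Nat.succ_le_succ hpB)
    · have hsb : s ≠ b := fun h => hb (h ▸ hsB)
      simp only [Walk.support_cons, List.mem_cons]
      rintro w (rfl | rfl | hw)
      exacts [.inr ⟨hyp.1, .inl hyA⟩, .inr ⟨hsb, .inr hsB⟩, hpsupp w hw]

variable {N : Finset V} {u v w w' : V}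

lemma IsCore.eq_of_adj_adj (hcore : IsCore G m (2 * m + 1) A B)
    (hfree : ¬ Contains G (theta (2 * m + 1))) (hN : ∀ x ∈ N, G.Adj u x) (hAN : A ⊆ N)
    (huB : u ∉ B) (hNB : Disjoint N B) (hv : v ∈ A) (hw : w ∈ N) (hw' : w' ∈ N)
    (hvw : G.Adj v w) (hww' : G.Adj w w') : w' = v := by
  by_contra hne
  have huN : u ∉ N := fun h => G.irrefl (hN u h)
  obtain ⟨x, hx, p, hp, hlen, -, hsupp⟩ := hcore.exists_alternating_isPath
    (hNB.mono_left hAN) hv (Finset.disjoint_left.1 hNB hw') (q := .cons hvw .nil)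
    (by simp [hvw.ne]) (by simp)
    (by simp [Finset.disjoint_left.1 hNB (hAN hv), Finset.disjoint_left.1 hNB hw]) le_rfl
  simp only [Walk.support_cons, Walk.support_nil, List.mem_cons, List.not_mem_nil, or_false,
    Walk.length_cons, Walk.length_nil] at hsupp hlen
  have hup : u ∉ p.support := fun h => by
    rcases hsupp u h with (rfl | rfl) | ⟨-, huA | huB'⟩
    exacts [huN (hAN hv), huN hw, huN (hAN huA), huB huB']
  have hw'p : w' ∉ p.support := fun h => by
    rcases hsupp w' h with (rfl | rfl) | ⟨h, -⟩
    exacts [hne rfl, G.irrefl hww', h rfl]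
  refine hfree (contains_theta_of_isPath (hp.cons (h := hN x (hAN hx)) hup)
    (by rw [Walk.length_cons]; omega) (hN w hw) (hN w' hw').symm hww'.symm ?_)
  simp [hw'p, (hN w' hw').ne']

lemma IsCore.exists_degreeIn_add_degreeIn_le (hcore : IsCore G m (2 * m + 1) A B)
    (hfree : ¬ Contains G (theta (2 * m + 1))) (hA : ∀ x ∈ A, G.Adj u x)
    (huB : u ∉ B) (hAB : Disjoint A B) (hv : v ∈ A) (hw : w ∈ A) (hvw : G.Adj v w) :
    ∃ x ∈ A, degreeIn G w B + degreeIn G x B ≤ #B + m := by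
  have huA : u ∉ A := fun h => G.irrefl (hA u h)
  have hwB : w ∉ B := Finset.disjoint_left.1 hAB hw
  obtain ⟨x, hx, p, hp, hlen, hpB, hsupp⟩ := hcore.exists_alternating_isPath
    hAB hv hwB (q := .nil) .nil (by simp) (by simp [Finset.disjoint_left.1 hAB hv]) le_rfl
  simp only [Walk.support_nil, List.mem_singleton, Walk.length_nil, zero_add] at hsupp hlen
  have hup : u ∉ p.support := fun h => by
    rcases hsupp u h with rfl | ⟨-, huA' | huB'⟩
    exacts [huA hv, huA huA', huB huB']
  have hwp : w ∉ p.support := fun h => by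
    rcases hsupp w h with rfl | ⟨h, -⟩
    exacts [G.irrefl hvw, h rfl]
  refine ⟨x, hx, not_lt.1 fun hlt => ?_⟩
  obtain ⟨s, hsB, hws, hxs, hsp⟩ := exists_common_adj_notMem p.support.toFinset
    ((Nat.add_le_add_left hpB _).trans_lt hlt)
  rw [List.mem_toFinset] at hsp
  refine hfree (contains_theta_of_isPath (p := .cons hws (.cons hxs.symm p)) (c := u) ?_
    (by rw [Walk.length_cons, Walk.length_cons]; omega) hvw.symm (hA w hw) (hA v hv) ?_)
  · simp [hp, hsp, hwp, hws.ne]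
  · have hus : u ≠ s := fun h => huB (h ▸ hsB)
    simp [hup, hus, (hA w hw).ne]

lemma IsCore.degreeIn_self_le_one (hcore : IsCore G m (2 * m + 1) A B)
    (hfree : ¬ Contains G (theta (2 * m + 1))) (hA : ∀ x ∈ A, G.Adj u x)
    (huB : u ∉ B) (hAB : Disjoint A B) (hv : v ∈ A) : degreeIn G v A ≤ 1 := by
  refine card_le_one.2 fun x hx y hy => ?_
  rw [mem_filter] at hx hy
  exact (hcore.eq_of_adj_adj hfree hA subset_rfl huB hAB hx.1 hv hy.1 hx.2.symm hy.2).symm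

lemma IsCore.degreeIn_add_degreeIn_self_le (hcore : IsCore G m (2 * m + 1) A B)
    (hfree : ¬ Contains G (theta (2 * m + 1))) (hA : ∀ x ∈ A, G.Adj u x)
    (huB : u ∉ B) (hAB : Disjoint A B) (hw : w ∈ A) :
    degreeIn G w B + degreeIn G w A ≤ #B := by
  rcases Nat.eq_zero_or_pos (degreeIn G w A) with hzero | hpos
  · simpa [hzero] using degreeIn_le_card
  · obtain ⟨v, hv, hwv⟩ := degreeIn_pos.1 hpos
    obtain ⟨x, hx, hle⟩ :=
      hcore.exists_degreeIn_add_degreeIn_le hfree hA huB hAB hv hw hwv.symm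
    have hone := hcore.degreeIn_self_le_one hfree hA huB hAB hw
    have hmx := hcore.left x hx
    omega

lemma IsCore.ordPairs_add_ordPairs_self_le (hcore : IsCore G m (2 * m + 1) A B)
    (hfree : ¬ Contains G (theta (2 * m + 1))) (hA : ∀ x ∈ A, G.Adj u x)
    (huB : u ∉ B) (hAB : Disjoint A B) :
    ordPairs G A B + ordPairs G A A ≤ #A * #B := by
  rw [ordPairs_eq_sum, ordPairs_eq_sum, ← sum_add_distrib, ← smul_eq_mul]
  exact sum_le_card_nsmul _ _ _ fun w hw =>
    hcore.degreeIn_add_degreeIn_self_le hfree hA huB hAB hw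

lemma IsCore.ordPairs_self_eq_zero (hcore : IsCore G m (2 * m + 1) A B)
    (hfree : ¬ Contains G (theta (2 * m + 1))) (hA : ∀ x ∈ A, G.Adj u x)
    (huB : u ∉ B) (hAB : Disjoint A B) (htight : #A * #B ≤ ordPairs G A B + ordPairs G A A)
    (hB : m + 2 < #B) : ordPairs G A A = 0 := by
  rw [ordPairs_eq_sum, ordPairs_eq_sum, ← sum_add_distrib, ← smul_eq_mul, ← sum_const] at htight
  have hle : ∀ x ∈ A, degreeIn G x B + degreeIn G x A ≤ #B := fun x hx =>
    hcore.degreeIn_add_degreeIn_self_le hfree hA huB hAB hx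
  have heq := (sum_eq_sum_iff_of_le hle).1 ((sum_le_sum hle).antisymm htight)
  rw [ordPairs_eq_sum]
  refine sum_eq_zero fun w hw => Nat.eq_zero_of_not_pos fun hpos => ?_
  obtain ⟨v, hv, hwv⟩ := degreeIn_pos.1 hpos
  obtain ⟨x, hx, hwx⟩ := hcore.exists_degreeIn_add_degreeIn_le hfree hA huB hAB hv hw hwv.symm
  have hw_one := hcore.degreeIn_self_le_one hfree hA huB hAB hw
  have hx_one := hcore.degreeIn_self_le_one hfree hA huB hAB hx
  have hw_eq := heq w hw
  have hx_eq := heq x hx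
  omega

lemma IsCore.ordPairs_self_le (hcore : IsCore G m (2 * m + 1) A B)
    (hfree : ¬ Contains G (theta (2 * m + 1))) (hN : ∀ x ∈ N, G.Adj u x) (hAN : A ⊆ N)
    (huB : u ∉ B) (hNB : Disjoint N B) :
    ordPairs G N N ≤ ordPairs G A A + 2 * (2 * m + 1) * #(N \ A) := by
  refine ordPairs_self_le_of_theta_free hfree hN hAN fun v hv ⟨w, hw, hvw⟩ => ?_
  have hvN := (mem_sdiff.1 hv).1
  have hone : degreeIn G v N ≤ 1 := by
    refine card_le_one.2 fun x hx y hy => ?_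
    rw [mem_filter] at hx hy
    rw [hcore.eq_of_adj_adj hfree hN hAN huB hNB hw hvN hx.1 hvw.symm hx.2,
      hcore.eq_of_adj_adj hfree hN hAN huB hNB hw hvN hy.1 hvw.symm hy.2]
  omega

end AlternatingPaths

section SecondNeighbourhood

lemma four_mul_core_bound_lt_sq {m a p b y : ℕ} (hp : 1 ≤ p) (hw : 2 ≤ b + y)
    (hn : 20 * m + 10 ≤ (a + p) + (b + y) + 1) :
    4 * ((a + p) + a * b + (5 * m + 2) * p + (2 * m + 1) * y) + 3
      < ((a + p) + (b + y) + 1) ^ 2 := by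
  rcases le_or_gt b (5 * m + 2) with hb | hb
  · have hle : (a + p) + a * b + (5 * m + 2) * p + (2 * m + 1) * y ≤
        (5 * m + 3) * (a + p) + (2 * m + 1) * (b + y) := by nlinarith
    nlinarith
  · -- It costs at most `5 * m + 2` to move all but one of the `p` vertices into the core.
    obtain ⟨q, rfl⟩ := Nat.exists_eq_add_of_le' hp
    have hmove : a * b + (5 * m + 2) * (q + 1) ≤ (a + q) * b + (5 * m + 2) := by nlinarith
    rcases le_or_gt (2 * m + 1) (a + q) with hd | hd
    · have hprod : (a + q) * b + (2 * m + 1) * y ≤ (a + q) * (b + y) := by nlinarith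
      have hamgm : 4 * ((a + q) * (b + y + 1)) ≤ (a + q + (b + y + 1)) ^ 2 := by
        rw [← mul_assoc]; exact four_mul_le_sq_add _ _
      nlinarith
    · nlinarith

variable {V : Type*} [Fintype V] {G : SimpleGraph V} {m : ℕ} {u : V}

lemma card_neighborFinset_add_card_compl (G : SimpleGraph V) (u : V) :
    #(G.neighborFinset u) + #(Gᶜ.neighborFinset u) + 1 = Fintype.card V := by
  have hlt := G.degree_lt_card_verts u
  have hcompl := G.degree_compl u
  simp only [card_neighborFinset_eq_degree]
  omega

lemma disjoint_neighborFinset_compl (G : SimpleGraph V) (u : V) :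
    Disjoint (G.neighborFinset u) (Gᶜ.neighborFinset u) :=
  Set.disjoint_toFinset.2 (compl_neighborSet_disjoint G u)

lemma degree_eq_degreeIn_univ (G : SimpleGraph V) (v : V) : G.degree v = degreeIn G v univ := by
  rw [degreeIn, ← card_neighborFinset_eq_degree, neighborFinset_eq_filter]

lemma degree_eq_degreeIn_add {v : V} (huv : G.Adj u v) :
    G.degree v =
      degreeIn G v (Gᶜ.neighborFinset u) + degreeIn G v (G.neighborFinset u) + 1 := by
  have huniv : (univ : Finset V) =
      insert u (Gᶜ.neighborFinset u ∪ G.neighborFinset u) := by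
    ext x
    by_cases hx : u = x <;> by_cases hux : G.Adj u x <;> simp [hx, hux]
  rw [degree_eq_degreeIn_univ, huniv, degreeIn_insert_of_adj huv.symm (by simp),
    degreeIn_union (disjoint_neighborFinset_compl G u).symm]

lemma sum_degree_neighborFinset (G : SimpleGraph V) (u : V) :
    ∑ v ∈ G.neighborFinset u, G.degree v =
      ordPairs G (G.neighborFinset u) (Gᶜ.neighborFinset u) +
      ordPairs G (G.neighborFinset u) (G.neighborFinset u) + #(G.neighborFinset u) := by
  rw [sum_congr rfl fun v hv => degree_eq_degreeIn_add ((mem_neighborFinset G u v).1 hv),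
    ordPairs_eq_sum, ordPairs_eq_sum, sum_add_distrib, sum_add_distrib, card_eq_sum_ones]

/-- The constant `5 * m + 1` is a common upper bound for `1`, the maximum degree inside a
neighbourhood when `m = 0`, and for `2 * (2 * m + 1)`, the degeneracy bound, when `1 ≤ m`. -/
lemma ordPairs_neighborFinset_self_le (hfree : ¬ Contains G (theta (2 * m + 1))) (u : V) :
    ordPairs G (G.neighborFinset u) (G.neighborFinset u) ≤
      (5 * m + 1) * #(G.neighborFinset u) := by
  have hN : ∀ x ∈ G.neighborFinset u, G.Adj u x := fun x => (mem_neighborFinset G u x).1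
  rcases Nat.eq_zero_or_pos m with rfl | hm
  · rw [ordPairs_eq_sum, mul_comm, ← smul_eq_mul]
    exact sum_le_card_nsmul _ _ _ fun v hv => degreeIn_le_one_of_theta_one_free hfree hN hv
  · have hle := ordPairs_self_le_of_theta_free hfree hN (empty_subset _) (by simp)
    rw [sdiff_empty, ordPairs_eq_sum (s := ∅), sum_empty, zero_add] at hle
    exact hle.trans (Nat.mul_le_mul_right _ (by omega))

lemma two_le_card_neighborFinset_compl (hfree : ¬ Contains G (theta (2 * m + 1)))
    (hn : 20 * m + 10 ≤ Fintype.card V)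
    (hu : Fintype.card V ^ 2 / 4 ≤ ∑ v ∈ G.neighborFinset u, G.degree v) :
    2 ≤ #(Gᶜ.neighborFinset u) := by
  have hself := ordPairs_neighborFinset_self_le hfree u
  have hcross := ordPairs_le_card_mul_card G (G.neighborFinset u) (Gᶜ.neighborFinset u)
  rw [sum_degree_neighborFinset] at hu
  rw [← card_neighborFinset_add_card_compl G u] at hn hu
  generalize #(G.neighborFinset u) = d at *
  generalize #(Gᶜ.neighborFinset u) = w at *
  by_contra! hw
  have hsq : (d + w + 1) ^ 2 < 4 * ((5 * m + w + 2) * d) + 4 := by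
    have hsum : (5 * m + w + 2) * d = d * w + (5 * m + 1) * d + d := by ring
    omega
  interval_cases w <;> nlinarith

lemma exists_isCore_neighborFinset (hfree : ¬ Contains G (theta (2 * m + 1))) (u : V) :
    ∃ A ⊆ G.neighborFinset u, ∃ B ⊆ Gᶜ.neighborFinset u, IsCore G m (2 * m + 1) A B ∧
      ∑ v ∈ G.neighborFinset u, G.degree v ≤ #(G.neighborFinset u) + #A * #B +
        (5 * m + 2) * #(G.neighborFinset u \ A) +
        (2 * m + 1) * #(Gᶜ.neighborFinset u \ B) := by
  have hN : ∀ x ∈ G.neighborFinset u, G.Adj u x := fun x => (mem_neighborFinset G u x).1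
  obtain ⟨A, hA, B, hB, hcore, hcross⟩ :=
    exists_isCore G m (2 * m + 1) (G.neighborFinset u) (Gᶜ.neighborFinset u)
  have huB : u ∉ B := fun h => notMem_neighborFinset_self _ _ (hB h)
  have hNB := (disjoint_neighborFinset_compl G u).mono_right hB
  have hself := hcore.ordPairs_self_le hfree hN hA huB hNB
  have hAB := hcore.ordPairs_add_ordPairs_self_le hfree (fun x hx => hN x (hA hx)) huB
    (hNB.mono_left hA)
  refine ⟨A, hA, B, hB, hcore, ?_⟩
  rw [sum_degree_neighborFinset]
  linarith

lemma mul_le_quarter_sq (a b : ℕ) : a * b ≤ (a + b) ^ 2 / 4 := by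
  rw [Nat.le_div_iff_mul_le four_pos]
  zify
  linarith [sq_nonneg ((a : ℤ) - b)]

lemma eq_zero_and_lt_of_quarter_sq_le {m d b y n : ℕ} (hcard : d + (b + y) + 1 = n)
    (hn : 20 * m + 10 ≤ n) (hw : 2 ≤ b + y)
    (h : n ^ 2 / 4 ≤ d + d * b + (2 * m + 1) * y) : y = 0 ∧ m + 2 < b := by
  have hsq : n ^ 2 < 4 * (d + d * b + (2 * m + 1) * y) + 4 := by omega
  have hd : 2 * m + 1 < d := by
    by_contra! hd
    nlinarith
  have hy : y = 0 := by
    by_contra hy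
    have hmul := mul_le_quarter_sq d (b + y + 1)
    rw [← add_assoc d, hcard] at hmul
    nlinarith [Nat.pos_of_ne_zero hy, hmul.trans h]
  subst hy
  refine ⟨rfl, ?_⟩
  by_contra! hb
  nlinarith

theorem ordPairs_neighborFinset_self_eq_zero (hfree : ¬ Contains G (theta (2 * m + 1)))
    (hn : 20 * m + 10 ≤ Fintype.card V)
    (hu : Fintype.card V ^ 2 / 4 ≤ ∑ v ∈ G.neighborFinset u, G.degree v) :
    ordPairs G (G.neighborFinset u) (G.neighborFinset u) = 0 := by
  have hN : ∀ x ∈ G.neighborFinset u, G.Adj u x := fun x => (mem_neighborFinset G u x).1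
  have hw := two_le_card_neighborFinset_compl hfree hn hu
  have hcard := card_neighborFinset_add_card_compl G u
  obtain ⟨A, hA, B, hB, hcore, hsum⟩ := exists_isCore_neighborFinset hfree u
  have hAcard := card_sdiff_add_card_eq_card hA
  have hBcard := card_sdiff_add_card_eq_card hB
  have hle := hu.trans hsum
  obtain rfl : A = G.neighborFinset u := by
    refine hA.antisymm (sdiff_eq_empty_iff_subset.1 (card_eq_zero.1 ?_))
    by_contra hp
    have hlt := four_mul_core_bound_lt_sq (m := m) (a := #A) (b := #B)
      (p := #(G.neighborFinset u \ A)) (y := #(Gᶜ.neighborFinset u \ B)) (by omega)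
      (by omega) (by omega)
    rw [add_comm #A, add_comm #B, hAcard, hBcard, hcard] at hlt
    omega
  rw [Finset.sdiff_self, card_empty, mul_zero, add_zero] at hle
  obtain ⟨hy, hb⟩ := eq_zero_and_lt_of_quarter_sq_le (by omega) hn (by omega) hle
  obtain rfl : B = Gᶜ.neighborFinset u :=
    hB.antisymm (sdiff_eq_empty_iff_subset.1 (card_eq_zero.1 hy))
  refine hcore.ordPairs_self_eq_zero hfree hN (notMem_neighborFinset_self _ _)
    (disjoint_neighborFinset_compl G u) ?_ hb
  have hmul := mul_le_quarter_sq #(G.neighborFinset u) (#(Gᶜ.neighborFinset u) + 1)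
  rw [← add_assoc, hcard] at hmul
  rw [sum_degree_neighborFinset] at hu
  linarith

end SecondNeighbourhood

section Spectrum

variable {V : Type*} [Fintype V] {G : SimpleGraph V} {l : ℝ}

lemma mem_spectrum_adjMatrix_iff [DecidableEq V] :
    l ∈ spectrum ℝ (G.adjMatrix ℝ) ↔
      ∃ x : V → ℝ, x ≠ 0 ∧ ∀ v, ∑ w ∈ G.neighborFinset v, x w = l * x v := by
  rw [← Matrix.spectrum_toLin', ← Module.End.hasEigenvalue_iff_mem_spectrum]
  constructor
  · intro h
    obtain ⟨x, hx⟩ := h.exists_hasEigenvector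
    refine ⟨x, hx.2, fun v => ?_⟩
    simpa only [Matrix.toLin'_apply, adjMatrix_mulVec_apply, Pi.smul_apply, smul_eq_mul]
      using congrFun hx.apply_eq_smul v
  · rintro ⟨x, hx, h⟩
    refine Module.End.hasEigenvalue_of_hasEigenvector (x := x) ⟨?_, hx⟩
    rw [Module.End.mem_eigenspace_iff]
    ext v
    simpa only [Matrix.toLin'_apply, adjMatrix_mulVec_apply, Pi.smul_apply, smul_eq_mul]
      using h v

lemma exists_max_pos_sq_mul_le_sum_sum [DecidableEq V]
    (hl : l ∈ spectrum ℝ (G.adjMatrix ℝ)) :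
    ∃ (f : V → ℝ) (u : V), 0 < f u ∧ (∀ v, f v ≤ f u) ∧
      ∀ v, l ^ 2 * f v ≤ ∑ w ∈ G.neighborFinset v, ∑ z ∈ G.neighborFinset w, f z := by
  obtain ⟨x, hx, hlx⟩ := mem_spectrum_adjMatrix_iff.1 hl
  obtain ⟨v₀, hv₀⟩ := Function.ne_iff.1 hx
  obtain ⟨u, -, hu⟩ := exists_max_image univ (|x ·|) ⟨v₀, mem_univ v₀⟩
  have habs : ∀ v, |l| * |x v| ≤ ∑ w ∈ G.neighborFinset v, |x w| := fun v => by
    rw [← abs_mul, ← hlx]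
    exact abs_sum_le_sum_abs _ _
  refine ⟨(|x ·|), u, (abs_pos.2 hv₀).trans_le (hu v₀ (mem_univ v₀)),
    fun v => hu v (mem_univ v), fun v => ?_⟩
  calc l ^ 2 * |x v| = |l| * (|l| * |x v|) := by rw [← sq_abs]; ring
    _ ≤ |l| * ∑ w ∈ G.neighborFinset v, |x w| := by gcongr; exact habs v
    _ = ∑ w ∈ G.neighborFinset v, |l| * |x w| := mul_sum _ _ _
    _ ≤ _ := sum_le_sum fun w _ => habs w

lemma sum_degree_eq_ordPairs_compl {s : Finset V} (h : ordPairs G s s = 0) :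
    ∑ v ∈ s, G.degree v = ordPairs G s sᶜ := by
  rw [ordPairs_eq_sum, sum_eq_zero_iff] at h
  rw [ordPairs_eq_sum]
  refine sum_congr rfl fun v hv => ?_
  rw [degree_eq_degreeIn_univ, ← union_compl s, degreeIn_union disjoint_compl_right, h v hv,
    zero_add]

lemma sum_degree_le_quarter_sq {s : Finset V} (h : ordPairs G s s = 0) :
    ∑ v ∈ s, G.degree v ≤ Fintype.card V ^ 2 / 4 := by
  rw [sum_degree_eq_ordPairs_compl h, ← card_add_card_compl s]
  exact (ordPairs_le_card_mul_card G s sᶜ).trans (mul_le_quarter_sq _ _)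

lemma adj_of_quarter_sq_le_sum_degree {s : Finset V} (h : ordPairs G s s = 0)
    (hs : Fintype.card V ^ 2 / 4 ≤ ∑ v ∈ s, G.degree v) {a b : V} (ha : a ∈ s) (hb : b ∉ s) :
    G.Adj a b := by
  refine ordPairs_eq_card_mul_card_iff.1 ?_ a ha b (mem_compl.2 hb)
  rw [sum_degree_eq_ordPairs_compl h, ← card_add_card_compl s] at hs
  exact (ordPairs_le_card_mul_card G s sᶜ).antisymm ((mul_le_quarter_sq _ _).trans hs)

lemma isTuranMaximal_two_of_isBipartiteWith {A B : Finset V} (h : G.IsBipartiteWith A B)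
    (hcard : Fintype.card V ^ 2 / 4 ≤ ∑ v ∈ A, G.degree v) : G.IsTuranMaximal 2 := by
  refine ⟨h.isBipartite.cliqueFree (by norm_num), fun H _ hH => ?_⟩
  have hchoose : (Fintype.card V % 2).choose 2 = 0 := Nat.choose_eq_zero_of_lt (by omega)
  have hle := hH.card_edgeFinset_le
  dsimp only at hle
  rw [hchoose, Nat.add_zero, Nat.mul_one] at hle
  rw [isBipartiteWith_sum_degrees_eq_card_edges h] at hcard
  exact (hle.trans (Nat.div_le_div_right (Nat.sub_le _ _))).trans hcard

lemma isTuranMaximal_two_of_neighborFinset {u : V}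
    (hu : Fintype.card V ^ 2 / 4 ≤ ∑ v ∈ G.neighborFinset u, G.degree v)
    (hindep : ordPairs G (G.neighborFinset u) (G.neighborFinset u) = 0)
    (htwo : ∀ v ∈ G.neighborFinset u, ∀ z ∈ G.neighborFinset v,
      ordPairs G (G.neighborFinset z) (G.neighborFinset z) = 0) :
    G.IsTuranMaximal 2 := by
  have hcompl : ∀ a ∉ G.neighborFinset u, ∀ b ∉ G.neighborFinset u, ¬ G.Adj a b := by
    intro a ha b hb hab
    obtain ⟨v, hv⟩ : (G.neighborFinset u).Nonempty := by
      by_contra! hempty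
      have hV : 2 ≤ Fintype.card V := Fintype.one_lt_card_iff.2 ⟨a, b, hab.ne⟩
      have hsq : 2 ^ 2 ≤ Fintype.card V ^ 2 := Nat.pow_le_pow_left hV 2
      rw [hempty, sum_empty] at hu
      omega
    have hva := adj_of_quarter_sq_le_sum_degree hindep hu hv ha
    have hvb := adj_of_quarter_sq_le_sum_degree hindep hu hv hb
    exact ordPairs_eq_zero_iff.1 (htwo v hv a (by simpa using hva)) v (by simpa using hva.symm) b
      (by simpa using hab) hvb
  refine isTuranMaximal_two_of_isBipartiteWith (A := G.neighborFinset u)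
    (B := (G.neighborFinset u)ᶜ) ⟨by simp [disjoint_compl_right], fun a b hab => ?_⟩ hu
  have hN := ordPairs_eq_zero_iff.1 hindep a
  simp only [coe_compl, mem_coe, Set.mem_compl_iff]
  grind

lemma sum_sum_neighborFinset_const_sub (f : V → ℝ) (c : ℝ) (u : V) :
    ∑ v ∈ G.neighborFinset u, ∑ z ∈ G.neighborFinset v, (c - f z) =
      c * (∑ v ∈ G.neighborFinset u, G.degree v : ℕ) -
        ∑ v ∈ G.neighborFinset u, ∑ z ∈ G.neighborFinset v, f z := by
  simp only [sum_sub_distrib, sum_const, card_neighborFinset_eq_degree, nsmul_eq_mul,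
    Nat.cast_sum, ← sum_mul, mul_comm c]

theorem eq_sqrt_and_isTuranMaximal_of_mem_spectrum [DecidableEq V]
    (hloc : ∀ u, Fintype.card V ^ 2 / 4 ≤ ∑ v ∈ G.neighborFinset u, G.degree v →
      ordPairs G (G.neighborFinset u) (G.neighborFinset u) = 0)
    (hl : l ∈ spectrum ℝ (G.adjMatrix ℝ)) (hle : √(Fintype.card V ^ 2 / 4 : ℕ) ≤ l) :
    l = √(Fintype.card V ^ 2 / 4 : ℕ) ∧ G.IsTuranMaximal 2 := by
  obtain ⟨f, u, hpos, hmax, hf⟩ := exists_max_pos_sq_mul_le_sum_sum hl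
  have hsq : ((Fintype.card V ^ 2 / 4 : ℕ) : ℝ) ≤ l ^ 2 :=
    (Real.sqrt_le_left ((Real.sqrt_nonneg _).trans hle)).1 hle
  have hdefect : ∀ v, ∀ w ∈ G.neighborFinset v, 0 ≤ ∑ z ∈ G.neighborFinset w, (f u - f z) :=
    fun v w _ => sum_nonneg fun z _ => sub_nonneg.2 (hmax z)
  have hwalk : ∀ v, f v = f u → l ^ 2 ≤ (∑ w ∈ G.neighborFinset v, G.degree w : ℕ) :=
    fun v hv => by
      have hnonneg := sum_nonneg (hdefect v)
      rw [sum_sum_neighborFinset_const_sub] at hnonneg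
      exact le_of_mul_le_mul_left (by linarith [hv ▸ hf v]) hpos
  have hquarter : ∀ v, f v = f u →
      Fintype.card V ^ 2 / 4 ≤ ∑ w ∈ G.neighborFinset v, G.degree w :=
    fun v hv => Nat.cast_le.1 (hsq.trans (hwalk v hv))
  have hindep : ∀ v, f v = f u → ordPairs G (G.neighborFinset v) (G.neighborFinset v) = 0 :=
    fun v hv => hloc v (hquarter v hv)
  have hdeg : (∑ w ∈ G.neighborFinset u, G.degree w : ℕ) ≤ ((Fintype.card V ^ 2 / 4 : ℕ) : ℝ) :=
    Nat.cast_le.2 (sum_degree_le_quarter_sq (hindep u rfl))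
  have hattain : ∀ v ∈ G.neighborFinset u, ∀ z ∈ G.neighborFinset v, f z = f u := by
    intro v hv z hz
    have hzero : ∑ v ∈ G.neighborFinset u, ∑ z ∈ G.neighborFinset v, (f u - f z) = 0 := by
      refine le_antisymm ?_ (sum_nonneg (hdefect u))
      rw [sum_sum_neighborFinset_const_sub]
      linarith [hf u, mul_le_mul_of_nonneg_left (hdeg.trans hsq) hpos.le]
    have hv_zero := (sum_eq_zero_iff_of_nonneg (hdefect u)).1 hzero v hv
    exact (sub_eq_zero.1
      ((sum_eq_zero_iff_of_nonneg fun z _ => sub_nonneg.2 (hmax z)).1 hv_zero z hz)).symm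
  exact ⟨(Real.le_sqrt_of_sq_le ((hwalk u rfl).trans hdeg)).antisymm hle,
    isTuranMaximal_two_of_neighborFinset (hquarter u rfl) (hindep u rfl)
      fun v hv z hz => hindep z (hattain v hv z hz)⟩

lemma sqrt_card_mul_card_mem_spectrum [DecidableEq V] {A : Finset V} (hA : A.Nonempty)
    (hA' : Aᶜ.Nonempty) (hadj : ∀ a b, G.Adj a b ↔ (a ∈ A ↔ b ∉ A)) :
    √(#A * #Aᶜ : ℕ) ∈ spectrum ℝ (G.adjMatrix ℝ) := by
  refine mem_spectrum_adjMatrix_iff.2 ⟨fun v => if v ∈ A then √(#Aᶜ) else √(#A), ?_, fun v => ?_⟩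
  · obtain ⟨a, ha⟩ := hA
    refine Function.ne_iff.2 ⟨a, ?_⟩
    simpa [ha] using hA'.ne_empty
  have hmul : √(#A * #Aᶜ : ℕ) = √(#A) * √(#Aᶜ) := by
    rw [Nat.cast_mul, Real.sqrt_mul (by positivity)]
  by_cases hv : v ∈ A
  · have hN : G.neighborFinset v = Aᶜ := by ext w; simp [hadj, hv]
    rw [hN, sum_congr rfl fun w hw => if_neg (mem_compl.1 hw)]
    beta_reduce
    rw [if_pos hv, sum_const, nsmul_eq_mul, hmul, mul_assoc, Real.mul_self_sqrt (by positivity),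
      mul_comm]
  · have hN : G.neighborFinset v = A := by ext w; simp [hadj, hv]
    rw [hN, sum_congr rfl fun w hw => if_pos hw]
    beta_reduce
    rw [if_neg hv, sum_const, nsmul_eq_mul, hmul, mul_right_comm,
      Real.mul_self_sqrt (by positivity)]

end Spectrum

section SpectralRadius

variable {n : ℕ} {G H : SimpleGraph (Fin n)}

lemma adjSpectralRadius_mem_spectrum (hn : 0 < n) (G : SimpleGraph (Fin n)) :
    adjSpectralRadius G ∈ spectrum ℝ (G.adjMatrix ℝ) := by
  refine Set.Nonempty.csSup_mem ?_ (Matrix.finite_real_spectrum)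
  rw [(G.isHermitian_adjMatrix ℝ).spectrum_real_eq_range_eigenvalues]
  exact ⟨_, ⟨0, hn⟩, rfl⟩

lemma le_adjSpectralRadius {l : ℝ} (hl : l ∈ spectrum ℝ (G.adjMatrix ℝ)) :
    l ≤ adjSpectralRadius G :=
  le_csSup Matrix.finite_real_spectrum.bddAbove hl

lemma adjSpectralRadius_congr (e : G ≃g H) : adjSpectralRadius G = adjSpectralRadius H := by
  rw [adjSpectralRadius, adjSpectralRadius, ← e.reindex_adjMatrix ℝ]
  exact congrArg sSup (AlgEquiv.spectrum_eq (Matrix.reindexAlgEquiv ℝ ℝ e.toEquiv) _).symm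

lemma card_filter_even (n : ℕ) : #{v : Fin n | Even v.val} = (n + 1) / 2 := by
  rw [card_filter, Fin.sum_univ_eq_sum_range (fun i => if Even i then 1 else 0)]
  induction n with
  | zero => rfl
  | succ n ih => rw [sum_range_succ, ih]; grind

lemma add_one_half_mul_half (n : ℕ) : (n + 1) / 2 * (n / 2) = n ^ 2 / 4 := by
  obtain ⟨k, rfl | rfl⟩ := n.even_or_odd'
  · rw [show (2 * k) ^ 2 = 4 * (k * k) by ring, show (2 * k + 1) / 2 = k by omega]
    simp
  · rw [show (2 * k + 1) ^ 2 = 4 * ((k + 1) * k) + 1 by ring,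
      show (2 * k + 1 + 1) / 2 = k + 1 by omega, show (2 * k + 1) / 2 = k by omega]
    omega

lemma sqrt_quarter_sq_le_adjSpectralRadius_turanGraph_two (hn : 2 ≤ n) :
    √(n ^ 2 / 4 : ℕ) ≤ adjSpectralRadius (turanGraph n 2) := by
  let A : Finset (Fin n) := {v | Even v.val}
  have hA : #A = (n + 1) / 2 := card_filter_even n
  have hAc : #Aᶜ = n / 2 := by rw [card_compl, hA, Fintype.card_fin]; omega
  have hA_ne : A.Nonempty := card_pos.1 (by omega)
  have hAc_ne : Aᶜ.Nonempty := card_pos.1 (by omega)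
  rw [← add_one_half_mul_half, ← hA, ← hAc]
  refine le_adjSpectralRadius (sqrt_card_mul_card_mem_spectrum hA_ne hAc_ne fun a b => ?_)
  simp only [turanGraph_adj, A, mem_filter_univ, Nat.even_iff]
  omega

lemma adjSpectralRadius_turanGraph_two (hn : 2 ≤ n) :
    adjSpectralRadius (turanGraph n 2) = √(n ^ 2 / 4 : ℕ) := by
  have hmax := eq_sqrt_and_isTuranMaximal_of_mem_spectrum (fun u _ => by
      rw [ordPairs_eq_zero_iff]
      simp only [mem_neighborFinset, turanGraph_adj]
      omega)
    (adjSpectralRadius_mem_spectrum (by omega) (turanGraph n 2))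
  rw [Fintype.card_fin] at hmax
  exact (hmax (sqrt_quarter_sq_le_adjSpectralRadius_turanGraph_two hn)).1

end SpectralRadius

/-- Theorem 1.7, odd case: for odd `r ≥ 1` and `n ≥ 10r`, the unique spectral extremal
`θ_{r+1}`-free graph on `n` vertices is `T_{n,2}`. -/
theorem stmt3 (r n : ℕ) (hr : 1 ≤ r) (hodd : Odd r) (hn : 10 * r ≤ n)
    (G : SimpleGraph (Fin n)) (hfree : ¬ Contains G (theta r)) :
    adjSpectralRadius G ≤ adjSpectralRadius (turanGraph n 2) ∧
    (adjSpectralRadius G = adjSpectralRadius (turanGraph n 2) ↔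
      Nonempty (G ≃g turanGraph n 2)) := by
  have hn_pos : 0 < n := by omega
  have hT := adjSpectralRadius_turanGraph_two (n := n) (by omega)
  obtain ⟨m, rfl⟩ := hodd
  have hmax : √(n ^ 2 / 4 : ℕ) ≤ adjSpectralRadius G →
      adjSpectralRadius G = √(n ^ 2 / 4 : ℕ) ∧ G.IsTuranMaximal 2 := by
    simpa only [Fintype.card_fin] using eq_sqrt_and_isTuranMaximal_of_mem_spectrum
      (fun _ => ordPairs_neighborFinset_self_eq_zero hfree (by rw [Fintype.card_fin]; omega))
      (adjSpectralRadius_mem_spectrum hn_pos G)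
  rw [hT]
  refine ⟨(le_total _ _).elim id fun h => (hmax h).1.le, fun h => ?_,
    fun ⟨e⟩ => (adjSpectralRadius_congr e).trans hT⟩
  have hiso := (hmax h.ge).2.nonempty_iso_turanGraph
  rwa [Fintype.card_fin] at hiso
end
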